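/- In the undirected 8-node graphs G and H of Fig. 2, where all edge weights equal 1 except that the edges {x_3,x_2} and {x_4,x_2} have weight 1+ε in G and weight 1+M in H (with 0 < ε ≪ 1 ≪ M), the traditional betweenness centrality of x_1 is the same in both graphs, C_B^G(x_1) = C_B^H(x_1) = 18, whereas the stable betweenness centrality distinguishes them: C_SB^G(x_1) = 36ε and C_SB^H(x_1) = 36M. -/

import Mathlib

/-!
The weights of the graph have the form `a + b c` with natural coefficients, so lengths can be
computed in `ℕ × ℕ` with the product order; `realize c : ℕ × ℕ → ℝ≥0∞` turns a pair into a length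
and, for `c > 0`, is strictly increasing (`realize_mono`, `realize_inj_of_le`).

For a target `y`, the lengths `D u` of explicit routes `u → y` form a feasible potential:
`D u ≤ w (u, v) + D v` along every edge, which by induction bounds the length of every walk
to `y` from below (`le_symLength`). In the full graph the equality `D u = w (u, v) + D v` happens
only when `v` is the next node of the route, so the route is the unique shortest walk
(`eq_route_of_symLength_eq`). Among the pairs with target other than `x_1`, only `(x_1, x_2)`
has two shortest paths, and no shortest path between nodes other than `x_1` reaches `x_1` on its way to `x_2`.

Hence each ratio `σ_{x'x''}(x_1) / σ_{x'x''}` is `1` or `0`, according to whether the route visits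
`x_1`, which happens for the `2 * 9` ordered pairs separated by the two hubs `x_3`, `x_4`.
Deleting `x_1` lengthens exactly those routes, each by `2 c` (detour through `x_2`), so
`C_SB(x_1) = 2 c * C_B(x_1)`.
-/

open scoped ENNReal

/-- `p` is the tail of a walk from `x` to `y` along edges of `E`:
the node sequence of the walk is `x :: p` and consecutive nodes are joined by edges in `E`. -/
def IsWalkFrom {V : Type*} (E : Finset (V × V)) (x y : V) (p : List V) : Prop :=
  List.Chain (fun a b => (a, b) ∈ E) x p ∧ (x :: p).getLast (List.cons_ne_nil x p) = y

/-- The length of the walk with node sequence `x :: p`: the sum of the weights of the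
traversed edges (as an extended nonnegative real). -/
noncomputable def walkLength {V : Type*} (W : V × V → ℝ) (x : V) (p : List V) : ℝ≥0∞ :=
  (((x :: p).zip p).map fun e => ENNReal.ofReal (W e)).sum

/-- Shortest path length `s_G(x,y)`: the infimum of the lengths of all paths from `x`
to `y`, equal to `∞` when no such path exists. -/
noncomputable def spdist {V : Type*} (E : Finset (V × V)) (W : V × V → ℝ) (x y : V) : ℝ≥0∞ :=
  sInf {l : ℝ≥0∞ | ∃ p : List V, IsWalkFrom E x y p ∧ l = walkLength W x p}

/-- The ℓ¹ metric `d_{(V,E)}` on the space of weighted graphs sharing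
the node set `V` and edge set `E`. -/
def graphDist {V : Type*} (E : Finset (V × V)) (W W' : V × V → ℝ) : ℝ :=
  ∑ e ∈ E, |W e - W' e|

/-- `σ_{x'x''}`: the number of shortest paths from `x'` to `x''`. -/
noncomputable def numSP {V : Type*} (E : Finset (V × V)) (W : V × V → ℝ) (x' x'' : V) : ℕ :=
  Set.ncard {p : List V | IsWalkFrom E x' x'' p ∧ walkLength W x' p = spdist E W x' x''}

/-- `σ_{x'x''}(x)`: the number of shortest paths from `x'` to `x''` passing through `x`. -/
noncomputable def numSPthrough {V : Type*} (E : Finset (V × V)) (W : V × V → ℝ)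
    (x x' x'' : V) : ℕ :=
  Set.ncard {p : List V |
    IsWalkFrom E x' x'' p ∧ walkLength W x' p = spdist E W x' x'' ∧ x ∈ x' :: p}

/-- Betweenness centrality `C_B(x) = ∑_{x',x'' ∈ V, x' ≠ x ≠ x''} σ_{x'x''}(x)/σ_{x'x''}`. -/
noncomputable def betweenness {V : Type*} [Fintype V] [DecidableEq V]
    (E : Finset (V × V)) (W : V × V → ℝ) (x : V) : ℝ :=
  ∑ x' ∈ Finset.univ.filter (· ≠ x), ∑ x'' ∈ Finset.univ.filter (· ≠ x),
    (numSPthrough E W x x' x'' : ℝ) / (numSP E W x' x'' : ℝ)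

/-- The edge set `E^x` of the graph `G^x`, obtained by deleting the node `x`
together with every edge directed to or from it. -/
def deleteNode {V : Type*} [DecidableEq V] (E : Finset (V × V)) (x : V) :
    Finset (V × V) :=
  E.filter fun e => e.1 ≠ x ∧ e.2 ≠ x

/-- The (directed version of the) edge set of the undirected 8-node graph of Fig. 1,
with nodes `0,…,7` standing for `x_1,…,x_8` and undirected edges
`{x_1,x_3}, {x_1,x_4}, {x_3,x_2}, {x_4,x_2}, {x_5,x_3}, {x_6,x_3}, {x_7,x_4}, {x_8,x_4}`. -/
def figEdges : Finset (Fin 8 × Fin 8) :=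
  {(0, 2), (2, 0), (0, 3), (3, 0), (2, 1), (1, 2), (3, 1), (1, 3),
   (4, 2), (2, 4), (5, 2), (2, 5), (6, 3), (3, 6), (7, 3), (3, 7)}

/-- Stable betweenness centrality
`C_SB(x) = ∑_{x',x'' ∈ V, x' ≠ x ≠ x''} (s_{G^x}(x',x'') - s_G(x',x''))`. -/
noncomputable def stableBetweenness {V : Type*} [Fintype V] [DecidableEq V]
    (E : Finset (V × V)) (W : V × V → ℝ) (x : V) : ℝ :=
  ∑ x' ∈ Finset.univ.filter (· ≠ x), ∑ x'' ∈ Finset.univ.filter (· ≠ x),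
    ((spdist (deleteNode E x) W x' x'').toReal - (spdist E W x' x'').toReal)

/-- The weights of the graphs of Fig. 2: the edges `{x_3,x_2}` and `{x_4,x_2}` (in both
directions) have weight `1 + c` and all other edges have weight `1`; `c = ε` gives the
graph `G` and `c = M` gives the graph `H`. -/
def figWeight2 (c : ℝ) (e : Fin 8 × Fin 8) : ℝ :=
  if e = ((2 : Fin 8), (1 : Fin 8)) ∨ e = ((1 : Fin 8), (2 : Fin 8)) ∨
     e = ((3 : Fin 8), (1 : Fin 8)) ∨ e = ((1 : Fin 8), (3 : Fin 8))
  then 1 + c else 1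

/-! ### Routes and symbolic lengths -/

/-- The hub (`2` or `3`) adjacent to a node, resp. the node itself if it is a hub; the nodes
`0` and `1` are adjacent to both hubs and are assigned `2`. -/
def hub : Fin 8 → Fin 8 := ![2, 2, 2, 3, 2, 2, 3, 3]

/-- The node following `x` on the chosen route from `x` to `y`, where `m` (`0` or `1`) is the
node used to cross from one hub to the other. -/
def nextHop (m x y : Fin 8) : Fin 8 :=
  if (x, y) ∈ figEdges then y
  else if x = 2 ∨ x = 3 then m
  else if x = 0 ∨ x = 1 then hub y
  else hub x

/-- The first `n` steps of the route from `x` to `y` crossing at `m`, without the initial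
node `x`. -/
def routeAux (m : Fin 8) : ℕ → Fin 8 → Fin 8 → List (Fin 8)
  | 0, _, _ => []
  | n + 1, x, y => if x = y then [] else nextHop m x y :: routeAux m n (nextHop m x y) y

/-- The tail of the route from `x` to `y` crossing at `m`; no route has more than 4 edges. -/
def route (m x y : Fin 8) : List (Fin 8) := routeAux m 4 x y

/-- The weight of an edge as a pair `(a, b)`, standing for `a + b c`. -/
def symWeight (e : Fin 8 × Fin 8) : ℕ × ℕ :=
  if e = ((2 : Fin 8), (1 : Fin 8)) ∨ e = ((1 : Fin 8), (2 : Fin 8)) ∨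
     e = ((3 : Fin 8), (1 : Fin 8)) ∨ e = ((1 : Fin 8), (3 : Fin 8))
  then (1, 1) else (1, 0)

/-- The length of the walk `x :: p` as a pair `(a, b)`, standing for `a + b c`. -/
def symLength : Fin 8 → List (Fin 8) → ℕ × ℕ
  | _, [] => 0
  | x, v :: p => symWeight (x, v) + symLength v p

/-- The extended nonnegative real `a + b c` represented by the pair `(a, b)`. -/
noncomputable def realize (c : ℝ) (z : ℕ × ℕ) : ℝ≥0∞ := ENNReal.ofReal (z.1 + z.2 * c)

/-! ### Symbolic versus actual lengths -/

section realize

variable {c : ℝ}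

lemma realize_add (hc : 0 < c) (z z' : ℕ × ℕ) :
    realize c (z + z') = realize c z + realize c z' := by
  unfold realize
  rw [← ENNReal.ofReal_add (by positivity) (by positivity)]
  congr 1
  push_cast [Prod.fst_add, Prod.snd_add]
  ring

lemma realize_mono (hc : 0 < c) {z z' : ℕ × ℕ} (h : z ≤ z') : realize c z ≤ realize c z' := by
  have h1 : (z.1 : ℝ) ≤ z'.1 := by exact_mod_cast h.1
  have h2 : (z.2 : ℝ) ≤ z'.2 := by exact_mod_cast h.2
  unfold realize
  gcongr

lemma toReal_realize (hc : 0 < c) (z : ℕ × ℕ) : (realize c z).toReal = z.1 + z.2 * c :=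
  ENNReal.toReal_ofReal (by positivity)

/-- For special values of `c` the map `realize c` is not injective, but it is so on
comparable pairs. -/
lemma realize_inj_of_le (hc : 0 < c) {z z' : ℕ × ℕ} (h : z ≤ z')
    (he : realize c z' = realize c z) : z = z' := by
  have h1 : (z.1 : ℝ) ≤ z'.1 := by exact_mod_cast h.1
  have h2 : (z.2 : ℝ) ≤ z'.2 := by exact_mod_cast h.2
  have e := congrArg ENNReal.toReal he
  rw [toReal_realize hc, toReal_realize hc] at e
  have h3 : (z.2 : ℝ) * c ≤ z'.2 * c := by gcongr
  have e1 : (z.1 : ℝ) = z'.1 := by linarith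
  have e2 : (z.2 : ℝ) = z'.2 := mul_right_cancel₀ hc.ne' (by linarith)
  exact Prod.ext (by exact_mod_cast e1) (by exact_mod_cast e2)

lemma ofReal_figWeight2 (e : Fin 8 × Fin 8) :
    ENNReal.ofReal (figWeight2 c e) = realize c (symWeight e) := by
  unfold figWeight2 symWeight realize
  split_ifs <;> simp

lemma walkLength_eq_realize (hc : 0 < c) (x : Fin 8) (p : List (Fin 8)) :
    walkLength (figWeight2 c) x p = realize c (symLength x p) := by
  induction p generalizing x with
  | nil => simp [walkLength, symLength, realize]
  | cons v p ih =>
    rw [symLength, realize_add hc, ← ih, ← ofReal_figWeight2]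
    simp [walkLength]

end realize

/-! ### The route lengths as a feasible potential -/

lemma isWalkFrom_nil {V : Type*} {E : Finset (V × V)} {x y : V} :
    IsWalkFrom E x y [] ↔ x = y := by
  simp [IsWalkFrom, List.Chain]

lemma isWalkFrom_cons {V : Type*} {E : Finset (V × V)} {x y v : V} {p : List V} :
    IsWalkFrom E x y (v :: p) ↔ (x, v) ∈ E ∧ IsWalkFrom E v y p := by
  simp [IsWalkFrom, List.Chain, and_assoc]

instance decidableIsWalkFrom {V : Type*} [DecidableEq V] (E : Finset (V × V)) (x y : V) :
    (p : List V) → Decidable (IsWalkFrom E x y p)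
  | [] => decidable_of_iff _ isWalkFrom_nil.symm
  | v :: p =>
    have := decidableIsWalkFrom E v y p
    decidable_of_iff _ isWalkFrom_cons.symm

/-- The route length is a feasible potential, so it bounds the length of every walk to `y`
from below. -/
lemma le_symLength {E : Finset (Fin 8 × Fin 8)} {m y : Fin 8}
    (hy : route m y y = [])
    (hD : ∀ e ∈ E, symLength e.1 (route m e.1 y) ≤ symWeight e + symLength e.2 (route m e.2 y))
    {x : Fin 8} {p : List (Fin 8)} (hp : IsWalkFrom E x y p) :
    symLength x (route m x y) ≤ symLength x p := by
  induction p generalizing x with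
  | nil =>
    obtain rfl := isWalkFrom_nil.1 hp
    rw [hy]
  | cons v p ih =>
    obtain ⟨he, hp⟩ := isWalkFrom_cons.1 hp
    exact (hD (x, v) he).trans (add_le_add_right (ih hp) _)

lemma spdist_eq {c : ℝ} (hc : 0 < c) {E : Finset (Fin 8 × Fin 8)} {m x y : Fin 8}
    (hy : route m y y = [])
    (hD : ∀ e ∈ E, symLength e.1 (route m e.1 y) ≤ symWeight e + symLength e.2 (route m e.2 y))
    (hw : IsWalkFrom E x y (route m x y)) :
    spdist E (figWeight2 c) x y = realize c (symLength x (route m x y)) := by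
  apply le_antisymm
  · exact sInf_le ⟨_, hw, (walkLength_eq_realize hc _ _).symm⟩
  · refine le_sInf ?_
    rintro _ ⟨p, hp, rfl⟩
    rw [walkLength_eq_realize hc]
    exact realize_mono hc (le_symLength hy hD hp)

lemma route_self (m y : Fin 8) : route m y y = [] := by simp [route, routeAux]

lemma potential_fig : ∀ y ≠ 0, ∀ e ∈ figEdges,
    symLength e.1 (route 0 e.1 y) ≤ symWeight e + symLength e.2 (route 0 e.2 y) := by
  decide +kernel

lemma potential_deleteNode : ∀ y ≠ 0, ∀ e ∈ deleteNode figEdges 0,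
    symLength e.1 (route 1 e.1 y) ≤ symWeight e + symLength e.2 (route 1 e.2 y) := by
  decide +kernel

lemma isWalkFrom_route_fig : ∀ x ≠ 0, ∀ y ≠ 0, IsWalkFrom figEdges x y (route 0 x y) := by
  decide +kernel

lemma isWalkFrom_route_deleteNode :
    ∀ x ≠ 0, ∀ y ≠ 0, IsWalkFrom (deleteNode figEdges 0) x y (route 1 x y) := by
  decide +kernel

/-! ### Uniqueness of shortest paths -/

/-- An edge that is tight for the potential starts the route. The pair `(0, 1)`, joined by two
shortest paths, has to be excluded, and no tight edge leads to it from another pair. -/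
lemma tight_edge : ∀ y ≠ 0, ∀ e ∈ figEdges, (e.1, y) ≠ (0, 1) →
    symLength e.1 (route 0 e.1 y) = symWeight e + symLength e.2 (route 0 e.2 y) →
    (e.2, y) ≠ (0, 1) ∧ route 0 e.1 y = e.2 :: route 0 e.2 y := by
  decide +kernel

lemma eq_route_of_symLength_eq {x y : Fin 8} (hy : y ≠ 0) (hxy : (x, y) ≠ (0, 1))
    {p : List (Fin 8)} (hp : IsWalkFrom figEdges x y p)
    (h : symLength x (route 0 x y) = symLength x p) : p = route 0 x y := by
  induction p generalizing x with
  | nil =>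
    obtain rfl := isWalkFrom_nil.1 hp
    rw [route_self]
  | cons v p ih =>
    obtain ⟨he, hp⟩ := isWalkFrom_cons.1 hp
    have h1 := potential_fig y hy (x, v) he
    have h2 := le_symLength (route_self 0 y) (potential_fig y hy) hp
    have h3 : symWeight (x, v) + symLength v (route 0 v y) ≤ symWeight (x, v) + symLength v p :=
      add_le_add_right h2 _
    have h4 : symLength x (route 0 x y) = symWeight (x, v) + symLength v p := h
    have h5 := le_antisymm h1 (h4 ▸ h3)
    obtain ⟨hv, hr⟩ := tight_edge y hy (x, v) he hxy h5
    have h6 : symLength v (route 0 v y) = symLength v p := add_left_cancel (h5.symm.trans h4)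
    rw [ih hv hp h6]
    exact hr.symm

lemma shortest_iff {c : ℝ} (hc : 0 < c) {x y : Fin 8} (hx : x ≠ 0) (hy : y ≠ 0)
    (p : List (Fin 8)) :
    IsWalkFrom figEdges x y p ∧
      walkLength (figWeight2 c) x p = spdist figEdges (figWeight2 c) x y ↔ p = route 0 x y := by
  have hw := isWalkFrom_route_fig x hx y hy
  rw [spdist_eq hc (route_self 0 y) (potential_fig y hy) hw, walkLength_eq_realize hc]
  constructor
  · rintro ⟨hp, h⟩
    exact eq_route_of_symLength_eq hy (by simp [hx]) hp
      (realize_inj_of_le hc (le_symLength (route_self 0 y) (potential_fig y hy) hp) h)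
  · rintro rfl
    exact ⟨hw, rfl⟩

/-! ### The two centralities -/

/-- The indicator of the event that the route from `x` to `y` visits the node `0`. -/
def visits (x y : Fin 8) : ℕ := if 0 ∈ x :: route 0 x y then 1 else 0

lemma numSP_eq {c : ℝ} (hc : 0 < c) {x y : Fin 8} (hx : x ≠ 0) (hy : y ≠ 0) :
    numSP figEdges (figWeight2 c) x y = 1 := by
  simp only [numSP, shortest_iff hc hx hy, Set.setOf_eq_eq_singleton, Set.ncard_singleton]

lemma numSPthrough_eq {c : ℝ} (hc : 0 < c) {x y : Fin 8} (hx : x ≠ 0) (hy : y ≠ 0) :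
    numSPthrough figEdges (figWeight2 c) 0 x y = visits x y := by
  simp only [numSPthrough, ← and_assoc, shortest_iff hc hx hy, visits]
  split_ifs with h
  · rw [Set.ncard_eq_one]
    refine ⟨route 0 x y, ?_⟩
    ext p
    simp only [Set.mem_setOf_eq, Set.mem_singleton_iff, and_iff_left_iff_imp]
    rintro rfl
    exact h
  · convert Set.ncard_empty (List (Fin 8))
    ext p
    simp only [Set.mem_setOf_eq, Set.mem_empty_iff_false, iff_false, not_and]
    rintro rfl
    exact h

lemma sum_visits : ∑ x ∈ Finset.univ.filter (· ≠ (0 : Fin 8)),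
    ∑ y ∈ Finset.univ.filter (· ≠ (0 : Fin 8)), visits x y = 18 := by
  decide +kernel

/-- Rerouting through the node `1` instead of `0` lengthens a route by `2 c`. -/
lemma symLength_detour : ∀ x ≠ 0, ∀ y ≠ 0,
    symLength x (route 1 x y) = symLength x (route 0 x y) + (0, 2 * visits x y) := by
  decide +kernel

lemma betweenness_eq {c : ℝ} (hc : 0 < c) : betweenness figEdges (figWeight2 c) 0 = 18 := by
  have h : betweenness figEdges (figWeight2 c) 0 = ∑ x ∈ Finset.univ.filter (· ≠ (0 : Fin 8)),
      ∑ y ∈ Finset.univ.filter (· ≠ (0 : Fin 8)), (visits x y : ℝ) := by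
    refine Finset.sum_congr rfl fun x hx => Finset.sum_congr rfl fun y hy => ?_
    have hx := (Finset.mem_filter.1 hx).2
    have hy := (Finset.mem_filter.1 hy).2
    rw [numSP_eq hc hx hy, numSPthrough_eq hc hx hy, Nat.cast_one, div_one]
  rw [h]
  exact_mod_cast sum_visits

lemma stableBetweenness_eq {c : ℝ} (hc : 0 < c) :
    stableBetweenness figEdges (figWeight2 c) 0 = 36 * c := by
  have h : stableBetweenness figEdges (figWeight2 c) 0 =
      ∑ x ∈ Finset.univ.filter (· ≠ (0 : Fin 8)),
        ∑ y ∈ Finset.univ.filter (· ≠ (0 : Fin 8)), (visits x y : ℝ) * (2 * c) := by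
    refine Finset.sum_congr rfl fun x hx => Finset.sum_congr rfl fun y hy => ?_
    have hx := (Finset.mem_filter.1 hx).2
    have hy := (Finset.mem_filter.1 hy).2
    rw [spdist_eq hc (route_self 0 y) (potential_fig y hy) (isWalkFrom_route_fig x hx y hy),
      spdist_eq hc (route_self 1 y) (potential_deleteNode y hy)
        (isWalkFrom_route_deleteNode x hx y hy),
      toReal_realize hc, toReal_realize hc, symLength_detour x hx y hy]
    push_cast [Prod.fst_add, Prod.snd_add]
    ring
  have hs : ∑ x ∈ Finset.univ.filter (· ≠ (0 : Fin 8)),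
      ∑ y ∈ Finset.univ.filter (· ≠ (0 : Fin 8)), (visits x y : ℝ) = 18 := by
    exact_mod_cast sum_visits
  simp only [h, ← Finset.sum_mul, hs]
  ring

/-- in the graphs `G` and `H` of Fig. 2 (with `0 < ε < 1 < M`), the
traditional betweenness centrality of `x_1` coincides,
`C_B^G(x_1) = C_B^H(x_1) = 18`, whereas the stable betweenness centrality distinguishes
the two graphs: `C_SB^G(x_1) = 36ε` and `C_SB^H(x_1) = 36M`. -/
theorem fig2_betweenness_vs_stableBetweenness
    (ε M : ℝ) (hε : 0 < ε) (hε1 : ε < 1) (hM : 1 < M) :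
    betweenness figEdges (figWeight2 ε) (0 : Fin 8) = 18 ∧
    betweenness figEdges (figWeight2 M) (0 : Fin 8) = 18 ∧
    stableBetweenness figEdges (figWeight2 ε) (0 : Fin 8) = 36 * ε ∧
    stableBetweenness figEdges (figWeight2 M) (0 : Fin 8) = 36 * M := by
  have hM0 : 0 < M := zero_lt_one.trans hM
  exact ⟨betweenness_eq hε, betweenness_eq hM0, stableBetweenness_eq hε,
    stableBetweenness_eq hM0⟩
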